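/- Let ℓ ≥ 1 be an integer and let p ∈ (0, π) satisfy sin(ℓp) ≠ 0 and sin((ℓ+1)p) ≠ 0. Then (ℓ+1)·cot((ℓ+1)p) ≠ ℓ·cot(ℓp). -/

import Mathlib

theorem abs_sin_nat_mul_le_aux (n : ℕ) (p : ℝ) :
    |Real.sin (n * p)| ≤ n * |Real.sin p| := by
  induction n with
  | zero => simp
  | succ k ih =>
    have h : ((k + 1 : ℕ) : ℝ) * p = k * p + p := by push_cast; ring
    rw [h, Real.sin_add]
    have h1 := abs_add_le (Real.sin (k * p) * Real.cos p) (Real.cos (k * p) * Real.sin p)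
    rw [abs_mul, abs_mul] at h1
    have h2 := mul_le_of_le_one_right (abs_nonneg (Real.sin (k * p))) (Real.abs_cos_le_one p)
    have h3 := mul_le_of_le_one_left (abs_nonneg (Real.sin p)) (Real.abs_cos_le_one (k * p))
    push_cast
    linarith

theorem cot_combination_ne (ℓ : ℕ) (hℓ : 1 ≤ ℓ) (p : ℝ)
    (hp : p ∈ Set.Ioo 0 Real.pi) (hs : Real.sin (ℓ * p) ≠ 0)
    (hs' : Real.sin ((ℓ + 1) * p) ≠ 0) :
    (ℓ + 1) * (Real.cos ((ℓ + 1) * p) / Real.sin ((ℓ + 1) * p)) ≠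
      ℓ * (Real.cos (ℓ * p) / Real.sin (ℓ * p)) := by
  intro h
  have hsp : 0 < Real.sin p := Real.sin_pos_of_pos_of_lt_pi hp.1 hp.2
  have hl : (0 : ℝ) < ℓ := by exact_mod_cast hℓ
  rw [← mul_div_assoc, ← mul_div_assoc, div_eq_div_iff hs' hs] at h
  have e : Real.sin p = Real.sin ((ℓ + 1) * p) * Real.cos (ℓ * p)
      - Real.cos ((ℓ + 1) * p) * Real.sin (ℓ * p) := by
    rw [← Real.sin_sub]; congr 1; ring
  have key : Real.cos ((ℓ + 1) * p) * Real.sin (ℓ * p) = ℓ * Real.sin p := by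
    rw [e]; linarith
  have hle := abs_sin_nat_mul_le_aux ℓ p
  rw [abs_of_pos hsp] at hle
  have hpos : 0 < ℓ * Real.sin p := mul_pos hl hsp
  have hc : |Real.cos ((ℓ + 1) * p)| < 1 := by
    rw [← sq_lt_one_iff_abs_lt_one]
    have := Real.sin_sq_add_cos_sq ((ℓ + 1) * p)
    have := pow_pos (abs_pos.mpr hs') 2
    rw [sq_abs] at this
    linarith
  have h4 : |Real.cos ((ℓ + 1) * p)| * |Real.sin (ℓ * p)| = ℓ * Real.sin p := by
    rw [← abs_mul, key, abs_of_pos hpos]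
  have h5 := mul_lt_mul_of_pos_right hc (abs_pos.mpr hs)
  linarith
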